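/- arXiv:2209.13259 — 2 statements merged into one kernel-verified Lean document; each statement's English description precedes it below -/
import Mathlib

section
/- Let λ, μ be real numbers with 0 < λ < μ and let y > 0. Define g : (0,∞) → ℝ by g(t) = μ·exp(−μ t)·exp(−(μ−λ)y) + (μ(μ−λ)/(2μ−λ)) · h(t), where h(t) = exp(−(μ−λ)y)·(exp((μ−λ)t) − exp(−μ t)) if t ≤ y and h(t) = (exp(μ y) − exp(−(μ−λ)y))·exp(−μ t) if t > y. Then ∫₀^∞ t·g(t) dt = 1/μ + y − (1 − exp(−(μ−λ)y))/(μ − λ). -/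
open MeasureTheory Real Set

lemma aux_deriv (c : ℝ) (hc : c ≠ 0) (t : ℝ) :
    HasDerivAt (fun t => (t / c - 1 / c ^ 2) * exp (c * t)) (t * exp (c * t)) t := by
  have h1 : HasDerivAt (fun t : ℝ => t / c - 1 / c ^ 2) (1 / c) t :=
    ((hasDerivAt_id t).div_const c).sub_const _
  have h2 : HasDerivAt (fun t : ℝ => exp (c * t)) (exp (c * t) * (c * 1)) t :=
    ((hasDerivAt_id t).const_mul c).exp
  convert! h1.mul h2 using 1
  field_simp
  ring

lemma aux_int (c : ℝ) (hc : c ≠ 0) (y : ℝ) :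
    ∫ t in (0:ℝ)..y, t * exp (c * t) = (y / c - 1 / c ^ 2) * exp (c * y) + 1 / c ^ 2 := by
  rw [intervalIntegral.integral_eq_sub_of_hasDerivAt (fun t _ => aux_deriv c hc t)
    (by apply Continuous.intervalIntegrable; fun_prop)]
  simp

lemma aux_tend (m : ℝ) (hm : 0 < m) :
    Filter.Tendsto (fun t => (t / (-m) - 1 / (-m) ^ 2) * exp (-m * t)) Filter.atTop
      (nhds 0) := by
  have h0 := Real.tendsto_pow_mul_exp_neg_atTop_nhds_zero 1
  have h1 := Real.tendsto_pow_mul_exp_neg_atTop_nhds_zero 0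
  have hm' : Filter.Tendsto (fun t : ℝ => m * t) Filter.atTop Filter.atTop :=
    Filter.tendsto_id.const_mul_atTop hm
  have := ((h0.comp hm').const_mul (-(1 / m ^ 2))).add ((h1.comp hm').const_mul (-(1 / m ^ 2)))
  simp only [mul_zero, add_zero] at this
  refine this.congr fun t => ?_
  simp only [Function.comp, neg_mul]
  field_simp
  ring

lemma aux_Ioi (m : ℝ) (hm : 0 < m) (y : ℝ) (hy : 0 < y) :
    IntegrableOn (fun t => t * exp (-m * t)) (Ioi y) ∧
    ∫ t in Ioi y, t * exp (-m * t) = (y / m + 1 / m ^ 2) * exp (-m * y) := by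
  have hd := fun t (_ : t ∈ Ici y) => aux_deriv (-m) (by linarith) t
  have hp : ∀ t ∈ Ioi y, 0 ≤ t * exp (-m * t) := fun t ht =>
    mul_nonneg (hy.le.trans (le_of_lt ht)) (exp_pos _).le
  refine ⟨integrableOn_Ioi_deriv_of_nonneg' hd hp (aux_tend m hm), ?_⟩
  rw [integral_Ioi_of_hasDerivAt_of_nonneg' hd hp (aux_tend m hm)]
  field_simp
  ring

/-- Equation (56): conditional expectation E[X | D = y] in an M/M/1 queue. -/
theorem stmt_12 (lam mu : ℝ) (hlam : 0 < lam) (hmu : lam < mu) (y : ℝ) (hy : 0 < y)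
    (g : ℝ → ℝ)
    (hg : ∀ t : ℝ, 0 < t →
      g t = mu * exp (-(mu * t)) * exp (-((mu - lam) * y))
        + mu * (mu - lam) / (2 * mu - lam) *
          (if t ≤ y then exp (-((mu - lam) * y)) * (exp ((mu - lam) * t) - exp (-(mu * t)))
           else (exp (mu * y) - exp (-((mu - lam) * y))) * exp (-(mu * t)))) :
    ∫ t in Ioi (0:ℝ), t * g t
      = 1 / mu + y - (1 - exp (-((mu - lam) * y))) / (mu - lam) := by
  have hm : 0 < mu := hlam.trans hmu
  obtain ⟨a, ha⟩ : ∃ a, a = mu - lam := ⟨_, rfl⟩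
  have ha0 : 0 < a := by linarith
  have hl : 2 * mu - lam = mu + a := by linarith
  rw [hl] at hg
  rw [← ha] at hg ⊢
  have e1 : EqOn (fun t => t * g t) (fun t =>
      (mu * exp (-(a * y)) - mu * a / (mu + a) * exp (-(a * y))) * (t * exp (-mu * t))
      + (mu * a / (mu + a) * exp (-(a * y))) * (t * exp (a * t))) (Ioc 0 y) := by
    intro t ht
    simp only [hg t ht.1, if_pos ht.2, neg_mul]
    ring
  have e2 : EqOn (fun t => t * g t) (fun t =>
      (mu * exp (-(a * y)) + mu * a / (mu + a) * (exp (mu * y) - exp (-(a * y))))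
        * (t * exp (-mu * t))) (Ioi y) := by
    intro t ht
    simp only [hg t (hy.trans ht), if_neg (not_le.mpr (mem_Ioi.mp ht)), neg_mul]
    ring
  obtain ⟨hi, hI⟩ := aux_Ioi mu hm y hy
  have i2 : IntegrableOn (fun t => t * g t) (Ioi y) :=
    (integrableOn_congr_fun e2 measurableSet_Ioi).2 (hi.const_mul _)
  have i1 : IntegrableOn (fun t => t * g t) (Ioc 0 y) := by
    refine (integrableOn_congr_fun e1 measurableSet_Ioc).2 ?_
    apply Continuous.integrableOn_Ioc
    fun_prop
  rw [← Ioc_union_Ioi_eq_Ioi hy.le, setIntegral_union (Ioc_disjoint_Ioi le_rfl)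
    measurableSet_Ioi i1 i2, setIntegral_congr_fun measurableSet_Ioc e1,
    setIntegral_congr_fun measurableSet_Ioi e2, integral_const_mul, hI,
    ← intervalIntegral.integral_of_le hy.le, intervalIntegral.integral_add
      (by apply Continuous.intervalIntegrable; fun_prop)
      (by apply Continuous.intervalIntegrable; fun_prop),
    intervalIntegral.integral_const_mul, intervalIntegral.integral_const_mul,
    aux_int _ (by linarith), aux_int _ ha0.ne', neg_mul, exp_neg, exp_neg]
  have hA := exp_pos (a * y)
  have hM := exp_pos (mu * y)
  have hs : 0 < mu + a := by linarith
  generalize exp (a * y) = A at *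
  generalize exp (mu * y) = M at *
  field_simp
  ring
end

section
/- Let λ₁, λ₂, μ_t, μ_c be real numbers with 0 < λ₁ < μ_t, λ₂ ≥ 0 and λ₁ + λ₂ < μ_c, and set λ = λ₁ + λ₂. Define P_I = λ₁/(μ_c−λ₂), P_L = (μ_c−λ)/(μ_c−λ₂), E_XI = 1/(μ_c−λ₂) − λ₁/(μ_t(μ_t−λ₁)) + (μ_c−λ₂)/((μ_t−λ₁)(μ_t+μ_c−λ)), E_WI = 1/(μ_c−λ), E_XWI = (λ₂/μ_c)·∫₀^∞ y·(1/μ_t + y − (1 − exp(−(μ_t−λ₁)y))/(μ_t−λ₁))·(μ_c−λ₂)·exp(−(μ_c−λ₂)y) dy, E_XL = 1/λ₁ + 1/(μ_c−λ₂) − λ₁/(μ_t(μ_t+μ_c−λ)), and E_WL = λ₂/(μ_c(μ_c−λ₂)). Then λ₁·( λ₁/(μ_t²(μ_t−λ₁)) + 1/(λ₁μ_t) + P_I·(E_XI·E_WI + E_XWI) + P_L·E_XL·E_WL + 1/(λ₁μ_c) + 1/λ₁² ) = λ₁²/(μ_t²(μ_t−λ₁)) + 1/μ_t + 1/μ_c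 + (λ₁²/((μ_c−λ)(μ_c−λ₂)))·[ 1/(μ_c−λ₂) − λ₁/(μ_t(μ_t−λ₁)) + (μ_c−λ₂)/((μ_t−λ₁)(μ_t+μ_c−λ)) ] + (λ₁²λ₂/(μ_c(μ_c−λ₂)))·[ 2/(μ_c−λ₂)² − λ₁/(μ_t(μ_t−λ₁)(μ_c−λ₂)) + (μ_c−λ₂)/((μ_t−λ₁)(μ_t+μ_c−λ)²) ] + (λ₁λ₂(μ_c−λ)/(μ_c(μ_c−λ₂)²))·[ 1/λ₁ − λ₁/(μ_t(μ_t+μ_c−λ)) + 1/(μ_c−λ₂) ] + 1/λ₁. -/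
open MeasureTheory Real Set

theorem aux_int_s15 (n : ℕ) (r : ℝ) (hr : 0 < r) :
    IntegrableOn (fun y : ℝ => y ^ n * exp (-(r * y))) (Ioi 0) ∧
    ∫ y in Ioi (0:ℝ), y ^ n * exp (-(r * y)) = (n.factorial : ℝ) / r ^ (n + 1) := by
  have key : ∫ y in Ioi (0:ℝ), y ^ n * exp (-(r * y)) = (n.factorial : ℝ) / r ^ (n + 1) := by
    have h := Real.integral_rpow_mul_exp_neg_mul_Ioi (a := (n:ℝ) + 1) (by positivity) hr
    rw [Real.Gamma_nat_eq_factorial] at h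
    have h3 : ((1 / r) ^ ((n:ℝ) + 1) : ℝ) = 1 / r ^ (n + 1) := by
      rw [← Nat.cast_succ, Real.rpow_natCast, one_div_pow]
    rw [h3] at h
    simp only [add_sub_cancel_right, Real.rpow_natCast] at h
    rw [h]; ring
  refine ⟨?_, key⟩
  by_contra hn
  have h0 := integral_undef hn
  rw [h0] at key
  have : 0 < (n.factorial : ℝ) / r ^ (n + 1) := by positivity
  linarith

theorem aux_main (t a c : ℝ) (ha : 0 < a) (hc : 0 < c) :
    ∫ y in Ioi (0:ℝ), y * (1 / t + y - (1 - exp (-(a * y))) / a) * (c * exp (-(c * y)))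
      = c * (1 / t - 1 / a) * (1 / c ^ 2) + c * (2 / c ^ 3) + c / a * (1 / (a + c) ^ 2) := by
  obtain ⟨i1, e1⟩ := aux_int_s15 1 c hc
  obtain ⟨i2, e2⟩ := aux_int_s15 2 c hc
  obtain ⟨i3, e3⟩ := aux_int_s15 1 (a + c) (by positivity)
  have hf : ∀ y : ℝ, y * (1 / t + y - (1 - exp (-(a * y))) / a) * (c * exp (-(c * y)))
      = c * (1 / t - 1 / a) * (y ^ 1 * exp (-(c * y))) + c * (y ^ 2 * exp (-(c * y)))
        + c / a * (y ^ 1 * exp (-((a + c) * y))) := by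
    intro y
    have : exp (-((a + c) * y)) = exp (-(a * y)) * exp (-(c * y)) := by
      rw [← Real.exp_add]; ring_nf
    rw [this]; ring
  simp_rw [hf]
  rw [integral_add, integral_add, integral_const_mul, integral_const_mul, integral_const_mul,
    e1, e2, e3]
  · norm_num [Nat.factorial]
  · exact i1.const_mul _
  · exact i2.const_mul _
  · exact (i1.const_mul _).add (i2.const_mul _)
  · exact i3.const_mul _

/-- Proposition 3: closed form of the timeliness of information at fog tier
(M/M/1 followed by a multi-source M/M/1). -/
theorem stmt_15 (lam1 lam2 μt μc : ℝ) (h1 : 0 < lam1) (ht : lam1 < μt)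
    (h2 : 0 ≤ lam2) (hc : lam1 + lam2 < μc)
    (lam : ℝ) (hlam : lam = lam1 + lam2)
    (P_I P_L E_XI E_WI E_XWI E_XL E_WL : ℝ)
    (hPI : P_I = lam1 / (μc - lam2))
    (hPL : P_L = (μc - lam) / (μc - lam2))
    (hEXI : E_XI = 1 / (μc - lam2) - lam1 / (μt * (μt - lam1))
      + (μc - lam2) / ((μt - lam1) * (μt + μc - lam)))
    (hEWI : E_WI = 1 / (μc - lam))
    (hEXWI : E_XWI = lam2 / μc * ∫ y in Ioi (0:ℝ),
      y * (1 / μt + y - (1 - exp (-((μt - lam1) * y))) / (μt - lam1))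
        * ((μc - lam2) * exp (-((μc - lam2) * y))))
    (hEXL : E_XL = 1 / lam1 + 1 / (μc - lam2) - lam1 / (μt * (μt + μc - lam)))
    (hEWL : E_WL = lam2 / (μc * (μc - lam2))) :
    lam1 * (lam1 / (μt ^ 2 * (μt - lam1)) + 1 / (lam1 * μt)
        + P_I * (E_XI * E_WI + E_XWI) + P_L * (E_XL * E_WL)
        + 1 / (lam1 * μc) + 1 / lam1 ^ 2)
      = lam1 ^ 2 / (μt ^ 2 * (μt - lam1)) + 1 / μt + 1 / μc
        + lam1 ^ 2 / ((μc - lam) * (μc - lam2)) *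
            (1 / (μc - lam2) - lam1 / (μt * (μt - lam1))
              + (μc - lam2) / ((μt - lam1) * (μt + μc - lam)))
        + lam1 ^ 2 * lam2 / (μc * (μc - lam2)) *
            (2 / (μc - lam2) ^ 2 - lam1 / (μt * (μt - lam1) * (μc - lam2))
              + (μc - lam2) / ((μt - lam1) * (μt + μc - lam) ^ 2))
        + lam1 * lam2 * (μc - lam) / (μc * (μc - lam2) ^ 2) *
            (1 / lam1 - lam1 / (μt * (μt + μc - lam)) + 1 / (μc - lam2))
        + 1 / lam1 := by
  rw [aux_main μt (μt - lam1) (μc - lam2) (by linarith) (by linarith)] at hEXWI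
  have e1 : μt - lam1 + (μc - lam2) = μt + μc - lam := by rw [hlam]; ring
  rw [e1] at hEXWI
  have p1 : μt - lam1 ≠ 0 := by apply ne_of_gt; linarith
  have p2 : μc - lam2 ≠ 0 := by apply ne_of_gt; linarith
  have p3 : μt + μc - lam ≠ 0 := by apply ne_of_gt; linarith
  have p4 : μc - lam ≠ 0 := by apply ne_of_gt; linarith
  have p5 : μt ≠ 0 := by apply ne_of_gt; linarith
  have p6 : μc ≠ 0 := by apply ne_of_gt; linarith
  have p7 : lam1 ≠ 0 := h1.ne'
  have e2 : 1 / μt - 1 / (μt - lam1) = - (lam1 / (μt * (μt - lam1))) := by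
    field_simp; ring
  rw [e2] at hEXWI
  have e3 : E_XWI = lam2 / μc * (2 / (μc - lam2) ^ 2 - lam1 / (μt * (μt - lam1) * (μc - lam2))
              + (μc - lam2) / ((μt - lam1) * (μt + μc - lam) ^ 2)) := by
    rw [hEXWI]
    congr 1
    generalize μt - lam1 = a at *
    generalize μc - lam2 = c at *
    generalize μt + μc - lam = d at *
    field_simp
    ring
  rw [hPI, hPL, ← hEXI, hEWI, e3, hEWL]
  have e4 : 1 / lam1 - lam1 / (μt * (μt + μc - lam)) + 1 / (μc - lam2) = E_XL := by
    rw [hEXL]; ring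
  rw [e4]
  generalize 2 / (μc - lam2) ^ 2 - lam1 / (μt * (μt - lam1) * (μc - lam2))
              + (μc - lam2) / ((μt - lam1) * (μt + μc - lam) ^ 2) = Z
  clear e4 e3 e2 e1 hEXWI hEXL hEXI hPI hPL hEWI hEWL
  generalize μt - lam1 = a at *
  generalize μc - lam2 = c at *
  generalize μc - lam = d at *
  field_simp
  try ring
end
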